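/- arXiv:1406.3327 — 2 statements merged into one kernel-verified Lean document; each statement's English description precedes it below -/
import Mathlib

section
/- For every setting, every type profile t, and every priority ordering π, every agent who receives its first-choice object under the serial dictatorship SD_π(t) also receives its first-choice object under NBM_π(t); i.e., the set of agents i with SD_π(t)_{i,ch(1,t_i)} = 1 is contained in the set of agents i with NBM_π(t)_{i,ch(1,t_i)} = 1. -/
/-!
Run the serial dictatorship and the first Boston round side by side over the priority list.
The remaining capacities under SD never exceed those of the Boston round: whenever an agent takes
a copy of its first choice in the Boston round, either SD gives it that same object, or that object
is already exhausted under SD (`sdStep_exhausted`). Hence an agent whose first choice is still available to it under SD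
also finds it available in the Boston round (`round_rel`). Later Boston rounds never revoke an
assignment (`applyRound_keeps`), so the first-round outcome is final.
-/


open Finset

/-- A preference type (strict ranking of the `m` objects): `t k` is the object
ranked `k`-th (0-indexed).  Object `a` is preferred to `b` iff
`t.symm a < t.symm b`. -/
abbrev Pref (m : ℕ) := Fin m ≃ Fin m

/-- One round of a Boston-style mechanism: the agents in `order` (highest priority
first) that are not yet assigned apply to `choice i`; an applicant receives a copy
iff the remaining capacity of its chosen object is still positive. -/
def applyRound {n m : ℕ} (choice : Fin n → Option (Fin m)) (order : List (Fin n))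
    (st : (Fin n → Option (Fin m)) × (Fin m → ℕ)) :
    (Fin n → Option (Fin m)) × (Fin m → ℕ) :=
  order.foldl
    (fun s i =>
      match s.1 i with
      | some _ => s
      | none =>
        match choice i with
        | none => s
        | some j =>
          if 0 < s.2 j then
            (Function.update s.1 i (some j), Function.update s.2 j (s.2 j - 1))
          else s)
    st

/-- The list of agents in order of priority under `π` (the agent with `π i = 0` first). -/
def priorityList {n : ℕ} (π : Equiv.Perm (Fin n)) : List (Fin n) :=
  (List.finRange n).map π.symm

/-- The most preferred object (under `ti`) among the objects with positive
remaining capacity, if any such object exists. -/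
def favorite {m : ℕ} (ti : Pref m) (cap : Fin m → ℕ) : Option (Fin m) :=
  ((List.finRange m).find? (fun k => decide (0 < cap (ti k)))).map ti

/-- The naïve Boston mechanism for a fixed priority ordering `π`: in round `k`
every not-yet-assigned agent applies to its `k`-th ranked object. -/
def NBMassign {n m : ℕ} (q : Fin m → ℕ) (t : Fin n → Pref m) (π : Equiv.Perm (Fin n)) :
    Fin n → Option (Fin m) :=
  ((List.finRange m).foldl
    (fun st k => applyRound (fun i => some (t i k)) (priorityList π) st)
    ((fun _ => none), q)).1

/-- The adaptive Boston mechanism for a fixed priority ordering `π`: in every round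
each not-yet-assigned agent applies to its most preferred object among the objects
with strictly positive remaining capacity (at the beginning of the round). -/
def ABMassign {n m : ℕ} (q : Fin m → ℕ) (t : Fin n → Pref m) (π : Equiv.Perm (Fin n)) :
    Fin n → Option (Fin m) :=
  ((fun st => applyRound (fun i => favorite (t i) st.2) (priorityList π) st)^[n]
    ((fun _ => none), q)).1

/-- The serial dictatorship for a fixed priority ordering `π`: agents are processed
in order of priority, each receiving one copy of its most preferred object among
those with remaining capacity. -/
def SDassign {n m : ℕ} (q : Fin m → ℕ) (t : Fin n → Pref m) (π : Equiv.Perm (Fin n)) :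
    Fin n → Option (Fin m) :=
  ((priorityList π).foldl
    (fun s i =>
      match favorite (t i) s.2 with
      | none => s
      | some j => (Function.update s.1 i (some j), Function.update s.2 j (s.2 j - 1)))
    ((fun _ => none), q)).1

/-- The (deterministic) allocation matrix induced by an assignment of objects to agents. -/
def detAlloc {n m : ℕ} (a : Fin n → Option (Fin m)) : Fin n → Fin m → ℝ :=
  fun i j => if a i = some j then 1 else 0

/-- The naïve Boston mechanism: the average of `NBMassign` over all `n!` priority orderings. -/
noncomputable def NBM {n m : ℕ} (q : Fin m → ℕ) (t : Fin n → Pref m) : Fin n → Fin m → ℝ :=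
  fun i j => (∑ π : Equiv.Perm (Fin n), detAlloc (NBMassign q t π) i j) / (Nat.factorial n)

/-- The adaptive Boston mechanism: the average of `ABMassign` over all `n!` priority orderings. -/
noncomputable def ABM {n m : ℕ} (q : Fin m → ℕ) (t : Fin n → Pref m) : Fin n → Fin m → ℝ :=
  fun i j => (∑ π : Equiv.Perm (Fin n), detAlloc (ABMassign q t π) i j) / (Nat.factorial n)

/-- Random serial dictatorship: the average of `SDassign` over all `n!` priority orderings. -/
noncomputable def RSD {n m : ℕ} (q : Fin m → ℕ) (t : Fin n → Pref m) : Fin n → Fin m → ℝ :=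
  fun i j => (∑ π : Equiv.Perm (Fin n), detAlloc (SDassign q t π) i j) / (Nat.factorial n)

/-- `x` is an allocation for capacities `q`. -/
def IsAlloc {n m : ℕ} (q : Fin m → ℕ) (x : Fin n → Fin m → ℝ) : Prop :=
  (∀ i j, 0 ≤ x i j ∧ x i j ≤ 1) ∧ (∀ i, ∑ j, x i j = 1) ∧ ∀ j, ∑ i, x i j ≤ q j

/-- First-order stochastic dominance of `v` over `w` with respect to the ranking `ti`. -/
def FOSD {m : ℕ} (ti : Pref m) (v w : Fin m → ℝ) : Prop :=
  ∀ K : Fin m, ∑ k ∈ Finset.Iic K, w (ti k) ≤ ∑ k ∈ Finset.Iic K, v (ti k)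

/-- Strict first-order stochastic dominance. -/
def StrictFOSD {m : ℕ} (ti : Pref m) (v w : Fin m → ℝ) : Prop :=
  FOSD ti v w ∧ ∃ K : Fin m, ∑ k ∈ Finset.Iic K, w (ti k) < ∑ k ∈ Finset.Iic K, v (ti k)

/-- `x` ordinally dominates `y` at type profile `t`. -/
def OrdDom {n m : ℕ} (t : Fin n → Pref m) (x y : Fin n → Fin m → ℝ) : Prop :=
  ∀ i, FOSD (t i) (x i) (y i)

/-- `x` strictly ordinally dominates `y` at type profile `t`. -/
def StrictOrdDom {n m : ℕ} (t : Fin n → Pref m) (x y : Fin n → Fin m → ℝ) : Prop :=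
  OrdDom t x y ∧ ∃ i : Fin n, ∃ K : Fin m,
    ∑ k ∈ Finset.Iic K, y i (t i k) < ∑ k ∈ Finset.Iic K, x i (t i k)

/-- The rank distribution of allocation `x` at profile `t`: `rankDist t x k` is the
expected number of `k`-th (0-indexed) choices allocated. -/
noncomputable def rankDist {n m : ℕ} (t : Fin n → Pref m) (x : Fin n → Fin m → ℝ)
    (k : Fin m) : ℝ :=
  ∑ i, x i (t i k)

/-- `x` weakly rank dominates `y` at profile `t`. -/
def WeakRankDom {n m : ℕ} (t : Fin n → Pref m) (x y : Fin n → Fin m → ℝ) : Prop :=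
  ∀ K : Fin m, ∑ k ∈ Finset.Iic K, rankDist t y k ≤ ∑ k ∈ Finset.Iic K, rankDist t x k

/-- `x` strictly rank dominates `y` at profile `t`. -/
def StrictRankDom {n m : ℕ} (t : Fin n → Pref m) (x y : Fin n → Fin m → ℝ) : Prop :=
  WeakRankDom t x y ∧ ∃ K : Fin m,
    ∑ k ∈ Finset.Iic K, rankDist t y k < ∑ k ∈ Finset.Iic K, rankDist t x k

/-- Feasibility of a deterministic (total) assignment. -/
def Feasible {n m : ℕ} (q : Fin m → ℕ) (y : Fin n → Fin m) : Prop :=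
  ∀ j, (Finset.univ.filter fun i => y i = j).card ≤ q j

/-- Ex-post efficiency at `t` of a deterministic assignment `a`: no feasible
deterministic assignment makes every agent weakly better off and some agent
strictly better off. -/
def ExPostEfficientAt {n m : ℕ} (q : Fin m → ℕ) (t : Fin n → Pref m)
    (a : Fin n → Option (Fin m)) : Prop :=
  ¬ ∃ y : Fin n → Fin m, Feasible q y ∧
      (∀ i j, a i = some j → (t i).symm (y i) ≤ (t i).symm j) ∧
      ∃ i j, a i = some j ∧ (t i).symm (y i) < (t i).symm j

/-- The expected number of allocated first choices under `x` at profile `t`. -/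
noncomputable def d1 {n m : ℕ} (t : Fin n → Pref m) (x : Fin n → Fin m → ℝ) : ℝ :=
  ∑ i, ∑ j, if ((t i).symm j : ℕ) = 0 then x i j else 0

/-- `x` is first-choice-maximizing at profile `t`. -/
def FirstChoiceMax {n m : ℕ} (q : Fin m → ℕ) (t : Fin n → Pref m)
    (x : Fin n → Fin m → ℝ) : Prop :=
  IsAlloc q x ∧ ∀ y : Fin n → Fin m → ℝ, IsAlloc q y → d1 t y ≤ d1 t x

/-- `u` is a vNM utility function consistent with the ranking `ti`. -/
def Consistent {m : ℕ} (ti : Pref m) (u : Fin m → ℝ) : Prop :=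
  ∀ a b : Fin m, ti.symm a < ti.symm b → u b < u a

/-- Uniformly relatively bounded indifference with bound `r`. -/
def URBI {m : ℕ} (r : ℝ) (u : Fin m → ℝ) : Prop :=
  ∀ a b : Fin m, u b < u a → u b - (⨅ j, u j) ≤ r * (u a - (⨅ j, u j))

lemma favorite_pos {m : ℕ} {ti : Pref m} {cap : Fin m → ℕ} {j : Fin m}
    (h : favorite ti cap = some j) : 0 < cap j := by
  unfold favorite at h
  rw [Option.map_eq_some_iff] at h
  obtain ⟨k, hk, rfl⟩ := h
  simpa using List.find?_some hk

lemma favorite_first {m : ℕ} {ti : Pref (m + 1)} {cap : Fin (m + 1) → ℕ}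
    (h : 0 < cap (ti 0)) : favorite ti cap = some (ti 0) := by
  simp [favorite, List.finRange_succ, h]

lemma applyRound_keeps {n m : ℕ} (choice : Fin n → Option (Fin m)) (order : List (Fin n))
    (st : (Fin n → Option (Fin m)) × (Fin m → ℕ)) {i : Fin n} {j : Fin m}
    (h : st.1 i = some j) : (applyRound choice order st).1 i = some j := by
  induction order generalizing st with
  | nil => exact h
  | cons a l ih =>
    refine ih _ ?_
    dsimp only
    split
    · exact h
    · split
      · exact h
      · split
        · rcases eq_or_ne i a with rfl | hia
          · simp_all
          · simpa [Function.update_of_ne hia] using h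
        · exact h

/-- One step of the serial dictatorship: agent `i` takes a copy of its favorite available object. -/
def sdStep {n m : ℕ} (t : Fin n → Pref m) (s : (Fin n → Option (Fin m)) × (Fin m → ℕ))
    (i : Fin n) : (Fin n → Option (Fin m)) × (Fin m → ℕ) :=
  match favorite (t i) s.2 with
  | none => s
  | some j => (Function.update s.1 i (some j), Function.update s.2 j (s.2 j - 1))

lemma SDassign_eq_foldl {n m : ℕ} (q : Fin m → ℕ) (t : Fin n → Pref m)
    (π : Equiv.Perm (Fin n)) :
    SDassign q t π = ((priorityList π).foldl (sdStep t) ((fun _ => none), q)).1 := by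
  unfold SDassign
  congr 2

/-- If the first choice of `a` is exhausted, its serial-dictatorship step raises no capacity and
creates no new first-choice assignment. -/
lemma sdStep_exhausted {n m : ℕ} {t : Fin n → Pref (m + 1)}
    {s : (Fin n → Option (Fin (m + 1))) × (Fin (m + 1) → ℕ)} {a : Fin n}
    (hs : s.2 (t a 0) = 0) :
    (∀ j, (sdStep t s a).2 j ≤ s.2 j) ∧
      ∀ b, (sdStep t s a).1 b = some (t b 0) → s.1 b = some (t b 0) := by
  unfold sdStep
  rcases hf : favorite (t a) s.2 with _ | g
  · exact ⟨fun _ => le_rfl, fun _ => id⟩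
  · have hg := favorite_pos hf
    have hne : g ≠ t a 0 := by rintro rfl; omega
    refine ⟨fun j => ?_, fun b => ?_⟩
    · simp only [Function.update_apply]
      split_ifs with h
      · subst h; omega
      · exact le_rfl
    · rcases eq_or_ne b a with rfl | hb
      · simp [hne]
      · simp [Function.update_of_ne hb]

/-- The invariant relating a serial-dictatorship state `s` to a state `r` of the first Boston
round: capacities in `s` are at most those in `r`, the Boston round has handed out only first
choices, and every first choice assigned in `s` is also assigned in `r`. -/
def RoundRel {n m : ℕ} (t : Fin n → Pref (m + 1))
    (s r : (Fin n → Option (Fin (m + 1))) × (Fin (m + 1) → ℕ)) : Prop :=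
  (∀ j, s.2 j ≤ r.2 j) ∧ (∀ b, r.1 b = none ∨ r.1 b = some (t b 0)) ∧
    ∀ b, s.1 b = some (t b 0) → r.1 b = some (t b 0)

lemma round_rel {n m : ℕ} (q : Fin (m + 1) → ℕ) (t : Fin n → Pref (m + 1))
    (l : List (Fin n)) :
    RoundRel t
      (l.foldl (sdStep t) ((fun _ => none), q))
      (applyRound (fun i => some (t i 0)) l ((fun _ => none), q)) := by
  unfold applyRound
  refine List.foldl_rel (r := RoundRel t) ⟨fun _ => le_rfl, fun _ => Or.inl rfl, by simp⟩ ?_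
  rintro a - ⟨sa, sc⟩ ⟨ra, rc⟩ ⟨hcap, hfirst, himp⟩
  dsimp only at hcap hfirst himp ⊢
  by_cases hs : 0 < sc (t a 0)
  · -- The first choice is available under SD, hence in the Boston round too.
    have hr : 0 < rc (t a 0) := hs.trans_le (hcap _)
    have hstep : sdStep t (sa, sc) a = (Function.update sa a (some (t a 0)),
        Function.update sc (t a 0) (sc (t a 0) - 1)) := by
      simp [sdStep, favorite_first hs]
    rw [hstep]
    rcases hfirst a with ha | ha
    · simp only [ha, hr, if_true]
      refine ⟨fun j => ?_, fun b => ?_, fun b => ?_⟩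
      · have := hcap j
        have := hcap (t a 0)
        simp only [Function.update_apply]
        split_ifs <;> omega
      · rcases eq_or_ne b a with rfl | hb
        · simp
        · simpa [Function.update_of_ne hb] using hfirst b
      · rcases eq_or_ne b a with rfl | hb
        · simp
        · simpa [Function.update_of_ne hb] using himp b
    · simp only [ha]
      refine ⟨fun j => ?_, hfirst, fun b => ?_⟩
      · have := hcap j
        have := hcap (t a 0)
        simp only [Function.update_apply]
        split_ifs with h
        · subst h; omega
        · omega
      · rcases eq_or_ne b a with rfl | hb
        · simp [ha]
        · simpa [Function.update_of_ne hb] using himp b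
  · -- The first choice is exhausted under SD, so the Boston round may only lower the capacity
    -- of an object whose SD capacity is zero.
    have hs0 : sc (t a 0) = 0 := by omega
    obtain ⟨hc', ha'⟩ := sdStep_exhausted (t := t) (s := (sa, sc)) hs0
    generalize sdStep t (sa, sc) a = s' at hc' ha' ⊢
    dsimp only at hc' ha'
    rcases hfirst a with ha | ha
    · simp only [ha]
      split_ifs with hr
      · refine ⟨fun j => ?_, fun b => ?_, fun b hb => ?_⟩
        · have h1 := hcap j
          have h2 := hc' j
          simp only [Function.update_apply]
          split_ifs with h
          · subst h; omega
          · omega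
        · rcases eq_or_ne b a with rfl | hb
          · simp
          · simpa [Function.update_of_ne hb] using hfirst b
        · rcases eq_or_ne b a with rfl | hba
          · simp
          · simpa [Function.update_of_ne hba] using himp b (ha' b hb)
      · exact ⟨fun j => (hc' j).trans (hcap j), hfirst, fun b hb => himp b (ha' b hb)⟩
    · simp only [ha]
      exact ⟨fun j => (hc' j).trans (hcap j), hfirst, fun b hb => himp b (ha' b hb)⟩

/-- every agent receiving its first choice (the object `j` of rank `0`
under `t i`) under `SD_π(t)` also receives its first choice under `NBM_π(t)`. -/
theorem sd_first_choice_subset_nbm_first_choice (n m : ℕ) (q : Fin m → ℕ)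
    (hq : n ≤ ∑ j, q j) (t : Fin n → Pref m) (π : Equiv.Perm (Fin n))
    (i : Fin n) (j : Fin m) (hj : ((t i).symm j : ℕ) = 0) :
    detAlloc (SDassign q t π) i j = 1 → detAlloc (NBMassign q t π) i j = 1 := by
  cases m with
  | zero => exact j.elim0
  | succ m =>
    have hj0 : j = t i 0 := by
      rw [← Equiv.symm_apply_eq]
      exact Fin.ext hj
    subst hj0
    intro h
    have hsd : SDassign q t π i = some (t i 0) := by
      by_contra hne
      simp [detAlloc, hne] at h
    rw [SDassign_eq_foldl] at hsd
    have h1 := (round_rel q t (priorityList π)).2.2 i hsd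
    have hnbm : NBMassign q t π i = some (t i 0) := by
      unfold NBMassign
      rw [List.finRange_succ, List.foldl_cons]
      exact List.foldlRecOn (motive := fun st => st.1 i = some (t i 0)) _ _ h1
        fun st hst k _ => applyRound_keeps _ _ st hst
    simp [detAlloc, hnbm]
end

section
/- The adaptive Boston mechanism is swap monotonic: for every setting, every agent i, every type profile (t_i, t_{-i}), and every type t_i' obtained from t_i by swapping two objects a, b that are adjacent in t_i with a ≻ b, either ABM_i(t_i, t_{-i}) = ABM_i(t_i', t_{-i}) as allocation vectors, or both ABM_i(t_i, t_{-i})_a > ABM_i(t_i', t_{-i})_a and ABM_i(t_i, t_{-i})_b < ABM_i(t_i', t_{-i})_b. -/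
/-!
Fix everything but the report of agent `i`, and let `a`, `b` be the swapped objects.  For a fixed
priority ordering `π`, the runs of the mechanism under the two reports coincide until a round in
which `i` is still unassigned and its favorite objects under the two reports differ; then these
favorites are `a` and `b` respectively (`favorite_swap`), and the run *diverges* (`runs_dichotomy`).

* Weak monotonicity holds for each `π` (`assign_mono`).  In the diverging round the two runs agree
  until it is the turn of `i`.  If a copy of `a` is left at that moment, `i` gets `a` under the
  truthful report; if not, `a` is exhausted and `i` never gets `a` under the swapped report.
  The argument for `b` is the same with the reports exchanged.
* If the run diverges for some `π`, reorder the agents: those assigned before the diverging round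
  first, sorted by the round of their assignment, then `i`, then all the others.  A round produces
  the same state under any order that puts everybody assigned by its end before everybody else
  (`fold_reorder`), so the rounds before the divergence are unchanged, while in the diverging round
  `i` is the first applicant and gets `a` under one report and `b` under the other
  (`exists_priority`).  This single ordering makes both inequalities strict.

If the run diverges for no `π`, the two allocation vectors of `i` are equal.
-/

open Finset

/-! ### One round -/

/-- The intermediate states of a mechanism: the partial assignment and the remaining capacities. -/
abbrev MState (n m : ℕ) := (Fin n → Option (Fin m)) × (Fin m → ℕ)

/-- The processing of a single agent within a round; a round is a left fold of this function. -/
def agentStep {n m : ℕ} (c : Fin n → Option (Fin m)) (s : MState n m) (i : Fin n) :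
    MState n m :=
  match s.1 i with
  | some _ => s
  | none =>
    match c i with
    | none => s
    | some j =>
      if 0 < s.2 j then
        (Function.update s.1 i (some j), Function.update s.2 j (s.2 j - 1))
      else s

theorem applyRound_eq {n m : ℕ} (c : Fin n → Option (Fin m)) (L : List (Fin n))
    (st : MState n m) : applyRound c L st = L.foldl (agentStep c) st := rfl

/-- An unassigned agent whose application is bound to be rejected. -/
def Stuck {n m : ℕ} (c : Fin n → Option (Fin m)) (s : MState n m) (x : Fin n) : Prop :=
  s.1 x = none ∧ ∀ j, c x = some j → s.2 j = 0

theorem agentStep_cases {n m : ℕ} (c : Fin n → Option (Fin m)) (s : MState n m) (x : Fin n) :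
    (agentStep c s x = s ∧ s.1 x ≠ none) ∨
    (agentStep c s x = s ∧ Stuck c s x) ∨
    ∃ j, s.1 x = none ∧ c x = some j ∧ 0 < s.2 j ∧
      agentStep c s x = (Function.update s.1 x (some j), Function.update s.2 j (s.2 j - 1)) := by
  unfold agentStep Stuck
  cases h : s.1 x with
  | some l => simp
  | none =>
    cases h' : c x with
    | none => simp
    | some j =>
      by_cases hj : 0 < s.2 j
      · simp [hj]
      · simp only [hj, if_false]
        right; left
        refine ⟨trivial, trivial, ?_⟩
        rintro l hl
        cases hl
        omega

theorem agentStep_some {n m : ℕ} (c : Fin n → Option (Fin m)) (s : MState n m) (x y : Fin n)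
    (j : Fin m) (h : s.1 y = some j) : (agentStep c s x).1 y = some j := by
  rcases agentStep_cases c s x with ⟨e, -⟩ | ⟨e, -⟩ | ⟨l, h1, -, -, e⟩
  · rwa [e]
  · rwa [e]
  · rw [e]
    have : y ≠ x := by rintro rfl; simp [h] at h1
    simp [this, h]

theorem agentStep_zero {n m : ℕ} (c : Fin n → Option (Fin m)) (s : MState n m) (x : Fin n)
    (j : Fin m) (h : s.2 j = 0) : (agentStep c s x).2 j = 0 := by
  rcases agentStep_cases c s x with ⟨e, -⟩ | ⟨e, -⟩ | ⟨l, h1, -, h3, e⟩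
  · rwa [e]
  · rwa [e]
  · rw [e]
    have : j ≠ l := by rintro rfl; omega
    simp [this, h]

theorem agentStep_stuck {n m : ℕ} (c : Fin n → Option (Fin m)) (s : MState n m) (x y : Fin n)
    (h : Stuck c s y) : Stuck c (agentStep c s x) y := by
  refine ⟨?_, fun j hj => agentStep_zero c s x j (h.2 j hj)⟩
  rcases agentStep_cases c s x with ⟨e, -⟩ | ⟨e, -⟩ | ⟨l, h1, h2, h3, e⟩
  · rw [e]; exact h.1
  · rw [e]; exact h.1
  · rw [e]
    have : y ≠ x := by
      rintro rfl
      have := h.2 l h2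
      omega
    simp [this, h.1]

theorem agentStep_eq_of_stuck {n m : ℕ} (c : Fin n → Option (Fin m)) (s : MState n m)
    (x : Fin n) (h : Stuck c s x) : agentStep c s x = s := by
  rcases agentStep_cases c s x with ⟨e, -⟩ | ⟨e, -⟩ | ⟨l, h1, h2, h3, e⟩
  · exact e
  · exact e
  · have := h.2 l h2
    omega

/-- Being out of copies of `a` without having assigned one to `i` is permanent. -/
theorem agentStep_missed {n m : ℕ} (c : Fin n → Option (Fin m)) (s : MState n m) (x i : Fin n)
    (a : Fin m) (h : s.2 a = 0 ∧ s.1 i ≠ some a) :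
    (agentStep c s x).2 a = 0 ∧ (agentStep c s x).1 i ≠ some a := by
  refine ⟨agentStep_zero c s x a h.1, ?_⟩
  rcases agentStep_cases c s x with ⟨e, -⟩ | ⟨e, -⟩ | ⟨l, h1, h2, h3, e⟩
  · rw [e]; exact h.2
  · rw [e]; exact h.2
  · rw [e]
    have hl : l ≠ a := by rintro rfl; omega
    by_cases hx : i = x
    · subst hx; simp [hl]
    · simp [hx, h.2]

theorem fold_invariant {n m : ℕ} (c : Fin n → Option (Fin m)) (P : MState n m → Prop)
    (hP : ∀ s x, P s → P (agentStep c s x)) (L : List (Fin n)) :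
    ∀ s, P s → P (L.foldl (agentStep c) s) := by
  induction L with
  | nil => exact fun s h => h
  | cons x L ih => exact fun s h => ih _ (hP s x h)

theorem fold_some {n m : ℕ} (c : Fin n → Option (Fin m)) (L : List (Fin n)) (s : MState n m)
    (y : Fin n) (j : Fin m) (h : s.1 y = some j) : (L.foldl (agentStep c) s).1 y = some j :=
  fold_invariant c (fun s => s.1 y = some j) (fun s x => agentStep_some c s x y j) L s h

theorem fold_stuck {n m : ℕ} (c : Fin n → Option (Fin m)) (L : List (Fin n)) (s : MState n m)
    (y : Fin n) (h : Stuck c s y) : Stuck c (L.foldl (agentStep c) s) y :=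
  fold_invariant c (fun s => Stuck c s y) (fun s x => agentStep_stuck c s x y) L s h

theorem fold_missed {n m : ℕ} (c : Fin n → Option (Fin m)) (L : List (Fin n)) (s : MState n m)
    (i : Fin n) (a : Fin m) (h : s.2 a = 0 ∧ s.1 i ≠ some a) :
    (L.foldl (agentStep c) s).2 a = 0 ∧ (L.foldl (agentStep c) s).1 i ≠ some a :=
  fold_invariant c (fun s => s.2 a = 0 ∧ s.1 i ≠ some a)
    (fun s x => agentStep_missed c s x i a) L s h

theorem agentStep_none_imp_stuck {n m : ℕ} (c : Fin n → Option (Fin m)) (s : MState n m)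
    (x : Fin n) (h : (agentStep c s x).1 x = none) : Stuck c s x := by
  rcases agentStep_cases c s x with ⟨e, h1⟩ | ⟨e, h1⟩ | ⟨l, h1, h2, h3, e⟩
  · rw [e] at h; exact absurd h h1
  · exact h1
  · rw [e] at h; simp at h

/-- An agent unassigned at the end of the round has no favorite, or one that is exhausted by then. -/
theorem stuck_of_fold_none {n m : ℕ} (c : Fin n → Option (Fin m)) (L : List (Fin n)) :
    ∀ (s : MState n m) (y : Fin n), y ∈ L → (L.foldl (agentStep c) s).1 y = none →
      Stuck c (L.foldl (agentStep c) s) y := by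
  induction L with
  | nil => simp
  | cons x L ih =>
    intro s y hy h
    rcases List.mem_cons.1 hy with rfl | hy
    · have hn : (agentStep c s y).1 y = none := by
        cases hh : (agentStep c s y).1 y with
        | none => rfl
        | some j =>
          have := fold_some c L _ y j hh
          simp only [List.foldl_cons] at h
          simp [h] at this
      exact fold_stuck c L _ y (agentStep_stuck c s y y (agentStep_none_imp_stuck c s y hn))
    · exact ih _ y hy h

theorem foldl_agentStep_congr {n m : ℕ} (c c' : Fin n → Option (Fin m)) (L : List (Fin n)) :
    ∀ (s : MState n m), (∀ x ∈ L, s.1 x = none → c x = c' x) →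
      L.foldl (agentStep c) s = L.foldl (agentStep c') s := by
  induction L with
  | nil => exact fun _ _ => rfl
  | cons x L ih =>
    intro s h
    have e : agentStep c s x = agentStep c' s x := by
      unfold agentStep
      cases hs : s.1 x with
      | some j => rfl
      | none => rw [h x (by simp) hs]
    simp only [List.foldl_cons]
    rw [← e]
    refine ih _ fun y hy hn => h y (by simp [hy]) ?_
    cases hh : s.1 y with
    | none => rfl
    | some j => simp [agentStep_some c s x y j hh] at hn

theorem fold_of_fixed {n m : ℕ} (c : Fin n → Option (Fin m)) (L : List (Fin n))
    (s : MState n m) (h : ∀ x ∈ L, agentStep c s x = s) : L.foldl (agentStep c) s = s := by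
  induction L with
  | nil => rfl
  | cons x L ih =>
    rw [List.foldl_cons, h x (by simp)]
    exact ih fun y hy => h y (by simp [hy])

/-! ### Reordering the agents within a round -/

/-- Two agents who both end up assigned can be processed in either order. -/
theorem agentStep_comm {n m : ℕ} (c : Fin n → Option (Fin m)) (s : MState n m) (x y : Fin n)
    (hx : (agentStep c (agentStep c s x) y).1 x ≠ none)
    (hy : (agentStep c (agentStep c s x) y).1 y ≠ none) :
    agentStep c (agentStep c s x) y = agentStep c (agentStep c s y) x := by
  by_cases hxy : x = y
  · subst hxy; rfl
  have skip : ∀ (s : MState n m) z, s.1 z ≠ none → agentStep c s z = s := by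
    intro s z hz
    rcases agentStep_cases c s z with ⟨e, -⟩ | ⟨e, -⟩ | ⟨l, h1, -⟩
    · exact e
    · exact e
    · exact absurd h1 hz
  have keep : ∀ (s : MState n m) z w, s.1 w ≠ none → (agentStep c s z).1 w ≠ none := by
    intro s z w hw
    obtain ⟨j, hj⟩ := Option.ne_none_iff_exists'.1 hw
    simp [agentStep_some c s z w j hj]
  have acc : ∀ (s : MState n m) z j, s.1 z = none → c z = some j → 0 < s.2 j →
      agentStep c s z =
        (Function.update s.1 z (some j), Function.update s.2 j (s.2 j - 1)) := by
    intro s z j h1 h2 h3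
    simp [agentStep, h1, h2, h3]
  rcases agentStep_cases c s x with ⟨e, h1⟩ | ⟨e, h1⟩ | ⟨j, h1, h2, h3, e⟩
  · rw [e, skip _ x (keep s y x h1)]
  · exact absurd (agentStep_stuck c _ y x (agentStep_stuck c s x x h1)).1 hx
  · rcases agentStep_cases c (agentStep c s x) y with
      ⟨e', h1'⟩ | ⟨e', h1'⟩ | ⟨l, h1', h2', h3', e'⟩
    · have hys : s.1 y ≠ none := by
        rw [e] at h1'
        simpa [Ne.symm hxy] using h1'
      rw [e', skip s y hys]
    · rw [e'] at hy
      exact absurd h1'.1 hy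
    · have hys : s.1 y = none := by
        rw [e] at h1'
        simpa [Ne.symm hxy] using h1'
      rw [e] at h3'
      have hl : 0 < s.2 l := by
        by_cases hlj : l = j
        · subst hlj; exact h3
        · simpa [hlj] using h3'
      have e2 := acc s y l hys h2' hl
      have hj' : 0 < (agentStep c s y).2 j := by
        rw [e2]
        by_cases hlj : j = l
        · subst hlj; simpa using h3'
        · simpa [hlj] using h3
      have e3 := acc (agentStep c s y) x j (by rw [e2]; simp [hxy, h1]) h2 hj'
      rw [e', e3, e2, e]
      refine Prod.ext ?_ ?_
      · exact Function.update_comm hxy _ _ _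
      · by_cases hlj : l = j
        · subst hlj; rfl
        · simp only [Function.update_of_ne hlj, Function.update_of_ne (Ne.symm hlj)]
          exact Function.update_comm (Ne.symm hlj) _ _ _

/-- If every agent of the list ends up assigned, then the order of processing is irrelevant. -/
theorem fold_perm {n m : ℕ} (c : Fin n → Option (Fin m)) {L L' : List (Fin n)}
    (hL : L.Perm L') : ∀ s : MState n m,
      (∀ x ∈ L, (L.foldl (agentStep c) s).1 x ≠ none) →
      L'.foldl (agentStep c) s = L.foldl (agentStep c) s := by
  induction hL with
  | nil => exact fun _ _ => rfl
  | cons x _ ih => exact fun s h => ih _ fun y hy => h y (by simp [hy])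
  | swap x y l =>
    intro s h
    simp only [List.foldl_cons] at h ⊢
    rw [agentStep_comm c s y x]
    · intro hn
      refine h y (by simp) (fold_stuck c l _ y ?_).1
      have hs : Stuck c s y := by
        apply agentStep_none_imp_stuck
        cases hh : (agentStep c s y).1 y with
        | none => rfl
        | some j => simp [agentStep_some c _ x y j hh] at hn
      exact agentStep_stuck c _ x y (agentStep_stuck c s y y hs)
    · intro hn
      refine h x (by simp) (fold_stuck c l _ x ?_).1
      exact agentStep_stuck c _ x x (agentStep_none_imp_stuck c _ x hn)
  | trans h1 _ ih1 ih2 =>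
    intro s h
    have e := ih1 s h
    rw [ih2 s (fun x hx => by rw [e]; exact h x (h1.mem_iff.2 hx)), e]

/-- Agents who end up unassigned have no influence on the round. -/
theorem fold_filter {n m : ℕ} (c : Fin n → Option (Fin m)) (p : Fin n → Bool)
    (L : List (Fin n)) : ∀ s : MState n m,
      (∀ x ∈ L, p x = false → (L.foldl (agentStep c) s).1 x = none) →
      (L.filter p).foldl (agentStep c) s = L.foldl (agentStep c) s := by
  induction L with
  | nil => exact fun _ _ => rfl
  | cons x L ih =>
    intro s h
    have ih' := ih (agentStep c s x) fun y hy => h y (by simp [hy])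
    cases hp : p x with
    | true => simpa [List.filter_cons, hp] using ih'
    | false =>
      have hx := h x (by simp) hp
      have hs : Stuck c s x := by
        apply agentStep_none_imp_stuck
        cases hh : (agentStep c s x).1 x with
        | none => rfl
        | some j =>
          have := fold_some c L _ x j hh
          rw [List.foldl_cons] at hx
          simp [hx] at this
      rw [agentStep_eq_of_stuck c s x hs] at ih'
      rw [List.foldl_cons, agentStep_eq_of_stuck c s x hs, List.filter_cons, hp]
      simpa using ih'

theorem filter_append_filter_not {α : Type*} (p : α → Bool) (L : List α)
    (h : L.Pairwise fun x y => p y = true → p x = true) :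
    L.filter p ++ L.filter (fun x => !p x) = L := by
  induction L with
  | nil => rfl
  | cons x L ih =>
    rw [List.pairwise_cons] at h
    cases hp : p x with
    | true => simp [hp, ih h.2]
    | false =>
      have h0 : ∀ y ∈ L, p y = false := by
        intro y hy
        by_contra hc
        simp [hp] at h
        exact hc (h.1 y hy)
      have e1 : L.filter p = [] := by
        rw [List.filter_eq_nil_iff]; intro y hy; simp [h0 y hy]
      have e2 : L.filter (fun x => !p x) = L := by
        rw [List.filter_eq_self]; intro y hy; simp [h0 y hy]
      simp [hp, e1, e2]

/-- A round has the same result under every order in which the agents assigned at its end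
precede the others. -/
theorem fold_reorder {n m : ℕ} (c : Fin n → Option (Fin m)) (L L' : List (Fin n))
    (hL : L.Perm L') (s : MState n m)
    (h : L'.Pairwise fun x y => (L.foldl (agentStep c) s).1 y ≠ none →
      (L.foldl (agentStep c) s).1 x ≠ none) :
    L'.foldl (agentStep c) s = L.foldl (agentStep c) s := by
  set p : Fin n → Bool := fun x => ((L.foldl (agentStep c) s).1 x).isSome with hp
  have e1 : (L.filter p).foldl (agentStep c) s = L.foldl (agentStep c) s := by
    apply fold_filter
    intro x _ hx
    simpa [hp] using hx
  have e2 : (L'.filter p).foldl (agentStep c) s = L.foldl (agentStep c) s := by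
    rw [← e1]
    apply fold_perm c (hL.filter p)
    intro x hx
    rw [e1]
    have := (List.mem_filter.1 hx).2
    simpa [hp, Option.isSome_iff_ne_none] using this
  rw [← filter_append_filter_not p L' (h.imp (by
    intro x y hxy
    simpa [hp, Option.isSome_iff_ne_none] using hxy)), List.foldl_append, e2]
  apply fold_of_fixed
  intro x hx
  rw [List.mem_filter] at hx
  apply agentStep_eq_of_stuck
  apply stuck_of_fold_none c L s x (hL.mem_iff.2 hx.1)
  simpa [hp] using hx.2

/-! ### Favorite objects under a swap -/

theorem favorite_eq_some_iff {m : ℕ} (ti : Pref m) (cap : Fin m → ℕ) (j : Fin m) :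
    favorite ti cap = some j ↔ 0 < cap j ∧ ∀ l, l < ti.symm j → cap (ti l) = 0 := by
  have key : ∀ p : Fin m,
      (List.finRange m).find? (fun k => decide (0 < cap (ti k))) = some p ↔
      0 < cap (ti p) ∧ ∀ l, l < p → cap (ti l) = 0 := by
    intro p
    rw [List.find?_eq_some_iff_getElem]
    constructor
    · rintro ⟨h1, i, hi, h2, h3⟩
      refine ⟨by simpa using h1, fun l hl => ?_⟩
      have hip : i = (p : ℕ) := by
        rw [← h2]; simp
      have := h3 l (by rw [hip]; exact hl)
      simpa using this
    · rintro ⟨h1, h2⟩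
      refine ⟨by simpa using h1, p, by simp, by simp, fun l hl => ?_⟩
      have := h2 ⟨l, by omega⟩ hl
      simp [this]
  unfold favorite
  rw [Option.map_eq_some_iff]
  constructor
  · rintro ⟨p, hp, rfl⟩
    simpa using (key p).1 hp
  · intro h
    exact ⟨ti.symm j, (key _).2 (by simpa using h), by simp⟩

theorem favorite_eq_none_iff {m : ℕ} (ti : Pref m) (cap : Fin m → ℕ) :
    favorite ti cap = none ↔ ∀ j, cap j = 0 := by
  unfold favorite
  rw [Option.map_eq_none_iff, List.find?_eq_none]
  constructor
  · intro h j
    have := h (ti.symm j) (List.mem_finRange _)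
    simpa using this
  · intro h j _
    simp [h]

/-- If an adjacent swap changes the favorite object, the favorites are the swapped objects. -/
theorem favorite_swap {m : ℕ} (ti : Pref m) (k k' : Fin m) (hkk' : (k : ℕ) + 1 = k')
    (cap : Fin m → ℕ) (h : favorite ti cap ≠ favorite ((Equiv.swap k k').trans ti) cap) :
    favorite ti cap = some (ti k) ∧
      favorite ((Equiv.swap k k').trans ti) cap = some (ti k') := by
  have hne : k ≠ k' := by rintro rfl; omega
  cases hf : favorite ti cap with
  | none =>
    refine absurd ?_ h
    rw [hf, eq_comm, favorite_eq_none_iff]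
    exact (favorite_eq_none_iff ti cap).1 hf
  | some j =>
    rw [hf] at h
    obtain ⟨h1, h2⟩ := (favorite_eq_some_iff ti cap j).1 hf
    obtain ⟨p, rfl⟩ := ti.surjective j
    rw [Equiv.symm_apply_apply] at h2
    by_cases hp : p = k ∧ 0 < cap (ti k')
    · obtain ⟨rfl, hb⟩ := hp
      refine ⟨rfl, ?_⟩
      rw [favorite_eq_some_iff]
      refine ⟨hb, fun l hl => ?_⟩
      simp only [Equiv.symm_trans_apply, Equiv.symm_apply_apply, Equiv.symm_swap,
        Equiv.swap_apply_right, Equiv.trans_apply] at hl ⊢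
      rw [Equiv.swap_apply_of_ne_of_ne (by omega) (by omega)]
      exact h2 l hl
    · refine absurd ?_ h
      rw [eq_comm, favorite_eq_some_iff]
      refine ⟨h1, fun l hl => ?_⟩
      simp only [Equiv.symm_trans_apply, Equiv.symm_apply_apply, Equiv.symm_swap,
        Equiv.trans_apply] at hl ⊢
      by_cases hpk : p = k
      · subst hpk
        have hb : cap (ti k') = 0 := by
          by_contra hc
          exact hp ⟨rfl, Nat.pos_of_ne_zero hc⟩
        rw [Equiv.swap_apply_left] at hl
        by_cases hl' : l = p
        · rw [hl', Equiv.swap_apply_left, hb]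
        · rw [Equiv.swap_apply_of_ne_of_ne hl' (by omega)]
          exact h2 l (by omega)
      · by_cases hpk' : p = k'
        · subst hpk'
          rw [Equiv.swap_apply_right] at hl
          rw [Equiv.swap_apply_of_ne_of_ne (by omega) (by omega)]
          exact h2 l (by omega)
        · rw [Equiv.swap_apply_of_ne_of_ne hpk hpk'] at hl
          apply h2
          by_cases hlk : l = k
          · rw [hlk, Equiv.swap_apply_left]; omega
          · by_cases hlk' : l = k'
            · rw [hlk', Equiv.swap_apply_right]; omega
            · rw [Equiv.swap_apply_of_ne_of_ne hlk hlk']; exact hl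

/-! ### Runs of the mechanism -/

theorem priorityList_perm {n : ℕ} (π : Equiv.Perm (Fin n)) :
    (priorityList π).Perm (List.finRange n) :=
  Equiv.Perm.map_finRange_perm π.symm

theorem mem_priorityList {n : ℕ} (π : Equiv.Perm (Fin n)) (i : Fin n) : i ∈ priorityList π :=
  (priorityList_perm π).mem_iff.2 (List.mem_finRange i)

theorem priorityList_nodup {n : ℕ} (π : Equiv.Perm (Fin n)) : (priorityList π).Nodup :=
  (priorityList_perm π).nodup_iff.2 (List.nodup_finRange n)

/-- One round of the adaptive Boston mechanism. -/
def abmRound {n m : ℕ} (t : Fin n → Pref m) (π : Equiv.Perm (Fin n)) (st : MState n m) :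
    MState n m :=
  (priorityList π).foldl (agentStep fun i => favorite (t i) st.2) st

/-- The state of the adaptive Boston mechanism after `r` rounds. -/
def abmRun {n m : ℕ} (q : Fin m → ℕ) (t : Fin n → Pref m) (π : Equiv.Perm (Fin n)) (r : ℕ) :
    MState n m :=
  (abmRound t π)^[r] ((fun _ => none), q)

theorem abmRun_succ {n m : ℕ} (q : Fin m → ℕ) (t : Fin n → Pref m) (π : Equiv.Perm (Fin n))
    (r : ℕ) : abmRun q t π (r + 1) = abmRound t π (abmRun q t π r) :=
  Function.iterate_succ_apply' _ _ _

theorem ABMassign_eq {n m : ℕ} (q : Fin m → ℕ) (t : Fin n → Pref m) (π : Equiv.Perm (Fin n)) :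
    ABMassign q t π = (abmRun q t π n).1 := rfl

theorem abmRun_invariant {n m : ℕ} (q : Fin m → ℕ) (t : Fin n → Pref m)
    (π : Equiv.Perm (Fin n)) (P : MState n m → Prop)
    (hP : ∀ c s x, P s → P (agentStep c s x)) {r r' : ℕ} (hr : r ≤ r')
    (h : P (abmRun q t π r)) : P (abmRun q t π r') := by
  induction r', hr using Nat.le_induction with
  | base => exact h
  | succ r' _ ih =>
    rw [abmRun_succ]
    exact fold_invariant _ P (hP _) _ _ ih

theorem abmRun_some {n m : ℕ} (q : Fin m → ℕ) (t : Fin n → Pref m)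
    (π : Equiv.Perm (Fin n)) {r r' : ℕ} (hr : r ≤ r') (y : Fin n) (j : Fin m)
    (h : (abmRun q t π r).1 y = some j) : (abmRun q t π r').1 y = some j :=
  abmRun_invariant q t π (fun s => s.1 y = some j) (fun c s x => agentStep_some c s x y j) hr h

/-- Profile pairs that differ only in agent `i`, and in such a way that whenever the favorites
of `i` differ, they are `a` and `b`. -/
def SwapRelated {n m : ℕ} (t t' : Fin n → Pref m) (i : Fin n) (a b : Fin m) : Prop :=
  (∀ x, x ≠ i → t x = t' x) ∧
    ∀ cap, favorite (t i) cap ≠ favorite (t' i) cap →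
      favorite (t i) cap = some a ∧ favorite (t' i) cap = some b

theorem SwapRelated.symm {n m : ℕ} {t t' : Fin n → Pref m} {i : Fin n} {a b : Fin m}
    (h : SwapRelated t t' i a b) : SwapRelated t' t i b a :=
  ⟨fun x hx => (h.1 x hx).symm, fun cap hc => (h.2 cap hc.symm).symm⟩

/-- The runs under `t` and `t'` agree through round `r`, at which point agent `i` is still
unassigned and has different favorites under its two reports. -/
def Diverges {n m : ℕ} (q : Fin m → ℕ) (t t' : Fin n → Pref m) (π : Equiv.Perm (Fin n))
    (i : Fin n) (r : ℕ) : Prop :=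
  (∀ s ≤ r, abmRun q t π s = abmRun q t' π s) ∧ (abmRun q t π r).1 i = none ∧
    favorite (t i) (abmRun q t π r).2 ≠ favorite (t' i) (abmRun q t π r).2

/-- The two runs agree through round `r`, unless they diverge in an earlier round. -/
theorem runs_dichotomy {n m : ℕ} (q : Fin m → ℕ) {t t' : Fin n → Pref m} {i : Fin n}
    (hoff : ∀ x, x ≠ i → t x = t' x) (π : Equiv.Perm (Fin n)) (r : ℕ) :
    (∀ s ≤ r, abmRun q t π s = abmRun q t' π s) ∨ ∃ r0 < r, Diverges q t t' π i r0 := by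
  induction r with
  | zero =>
    left
    intro s hs
    obtain rfl : s = 0 := by omega
    rfl
  | succ r ih =>
    rcases ih with ih | ⟨r0, h0, h1⟩
    · by_cases hd : Diverges q t t' π i r
      · exact Or.inr ⟨r, by omega, hd⟩
      · left
        intro s hs
        rcases Nat.lt_or_ge r s with h | h
        · obtain rfl : s = r + 1 := by omega
          rw [abmRun_succ, abmRun_succ, ← ih r le_rfl]
          apply foldl_agentStep_congr
          intro x _ hx
          by_cases hxi : x = i
          · subst hxi
            by_contra hc
            exact hd ⟨ih, hx, hc⟩
          · simp only [hoff x hxi]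
        · exact ih s h
    · exact Or.inr ⟨r0, by omega, h1⟩

/-- For each priority ordering, if `i` obtains `a` under the report that demotes `a`, it also
obtains `a` under the original report. -/
theorem assign_mono {n m : ℕ} (q : Fin m → ℕ) {t t' : Fin n → Pref m} {i : Fin n} {a b : Fin m}
    (hs : SwapRelated t t' i a b) (π : Equiv.Perm (Fin n))
    (h : ABMassign q t' π i = some a) : ABMassign q t π i = some a := by
  rw [ABMassign_eq] at h ⊢
  rcases runs_dichotomy q hs.1 π n with he | ⟨r, hr, he, hn, hd⟩
  · rwa [he n le_rfl]
  · obtain ⟨fa, fb⟩ := hs.2 _ hd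
    obtain ⟨L1, L2, hL⟩ := List.append_of_mem (mem_priorityList π i)
    have hnd := priorityList_nodup π
    rw [hL] at hnd
    have hi1 : i ∉ L1 := by
      intro hc
      have := List.nodup_append.1 hnd
      exact this.2.2 i hc i (by simp) rfl
    set st := abmRun q t π r with hst
    set c : Fin n → Option (Fin m) := fun x => favorite (t x) st.2 with hc
    set c' : Fin n → Option (Fin m) := fun x => favorite (t' x) st.2 with hc'
    have e1 : L1.foldl (agentStep c) st = L1.foldl (agentStep c') st := by
      apply foldl_agentStep_congr
      intro x hx _
      have hxi : x ≠ i := by rintro rfl; exact hi1 hx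
      simp only [hc, hc', hs.1 x hxi]
    have f1 : abmRun q t π (r + 1) =
        L2.foldl (agentStep c) (agentStep c (L1.foldl (agentStep c) st) i) := by
      rw [abmRun_succ, abmRound, hL, List.foldl_append, List.foldl_cons]
    have f2 : abmRun q t' π (r + 1) =
        L2.foldl (agentStep c') (agentStep c' (L1.foldl (agentStep c) st) i) := by
      rw [abmRun_succ, abmRound, hL, List.foldl_append, List.foldl_cons, ← he r le_rfl, e1]
    set s1 := L1.foldl (agentStep c) st with hs1
    -- `i` itself is not processed in `L1`, hence still unassigned at its turn.
    have hs1n : s1.1 i = none := by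
      have : ∀ (L : List (Fin n)) (s : MState n m), i ∉ L → s.1 i = none →
          (L.foldl (agentStep c) s).1 i = none := by
        intro L
        induction L with
        | nil => exact fun s _ h => h
        | cons x L ih =>
          intro s hiL h
          simp only [List.mem_cons, not_or] at hiL
          refine ih _ hiL.2 ?_
          rcases agentStep_cases c s x with ⟨e, -⟩ | ⟨e, -⟩ | ⟨l, -, -, -, e⟩
          · rwa [e]
          · rwa [e]
          · rw [e]; simp [hiL.1, h]
      exact this L1 st hi1 hn
    by_cases hca : 0 < s1.2 a
    · apply abmRun_some q t π (Nat.succ_le_of_lt hr) i a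
      rw [Nat.succ_eq_add_one, f1]
      apply fold_some
      have hci : c i = some a := fa
      simp [agentStep, hs1n, hci, hca]
    · exfalso
      have hinv : (abmRun q t' π n).2 a = 0 ∧ (abmRun q t' π n).1 i ≠ some a := by
        apply abmRun_invariant q t' π (fun s => s.2 a = 0 ∧ s.1 i ≠ some a)
          (fun c s x => agentStep_missed c s x i a) (Nat.succ_le_of_lt hr)
        rw [Nat.succ_eq_add_one, f2]
        apply fold_missed
        apply agentStep_missed
        exact ⟨by omega, by simp [hs1n]⟩
      exact hinv.2 h

/-! ### A priority ordering that separates the two reports -/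

/-- If the agents are processed in an order in which `i` precedes all other unassigned agents,
then `i` receives its favorite object. -/
theorem round_first {n m : ℕ} (t : Fin n → Pref m) (π : Equiv.Perm (Fin n)) (st : MState n m)
    (i : Fin n) (a : Fin m) (hn : st.1 i = none) (hf : favorite (t i) st.2 = some a)
    (hL : (priorityList π).Pairwise fun x y => y = i → st.1 x ≠ none) :
    (abmRound t π st).1 i = some a := by
  obtain ⟨L1, L2, e⟩ := List.append_of_mem (mem_priorityList π i)
  rw [abmRound]
  rw [e] at hL ⊢
  rw [List.foldl_append, List.foldl_cons, fold_of_fixed _ L1]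
  · apply fold_some
    have := ((favorite_eq_some_iff _ _ _).1 hf).1
    simp [agentStep, hn, hf, this]
  · intro x hx
    have hx' := (List.pairwise_append.1 hL).2.2 x hx i (by simp) rfl
    rcases agentStep_cases (fun i => favorite (t i) st.2) st x with
      ⟨e, -⟩ | ⟨e, -⟩ | ⟨l, h1, -⟩
    · exact e
    · exact e
    · exact (hx' h1).elim

/-- The runs under `π` and `π'` agree through round `r` if `π'` always puts the agents assigned
in the run under `π` before those that are not. -/
theorem abmRun_reorder {n m : ℕ} (q : Fin m → ℕ) (t : Fin n → Pref m)
    (π π' : Equiv.Perm (Fin n)) (r : ℕ)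
    (h : ∀ s ≤ r, (priorityList π').Pairwise fun x y =>
      (abmRun q t π s).1 y ≠ none → (abmRun q t π s).1 x ≠ none) :
    ∀ s ≤ r, abmRun q t π' s = abmRun q t π s := by
  intro s
  induction s with
  | zero => exact fun _ => rfl
  | succ s ih =>
    intro hs
    have hp := h (s + 1) hs
    rw [abmRun_succ, abmRun_succ, ih (by omega)]
    rw [abmRun_succ] at hp
    exact fold_reorder _ _ _ ((priorityList_perm π).trans (priorityList_perm π').symm) _ hp

theorem exists_sorted {n : ℕ} (key : Fin n → ℕ) :
    ∃ π : Equiv.Perm (Fin n), (priorityList π).Pairwise fun x y => key x ≤ key y := by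
  refine ⟨(Tuple.sort key).symm, ?_⟩
  rw [priorityList, List.pairwise_map]
  refine (List.pairwise_le_finRange n).imp ?_
  intro x y hxy
  exact Tuple.monotone_sort key hxy

/-- A divergence for one priority ordering yields an ordering under which `i` obtains `a` under
one report and `b` under the other. -/
theorem exists_priority {n m : ℕ} (q : Fin m → ℕ) {t t' : Fin n → Pref m} {i : Fin n}
    {a b : Fin m} (hs : SwapRelated t t' i a b) (π : Equiv.Perm (Fin n)) (r : ℕ) (hr : r < n)
    (hd : Diverges q t t' π i r) :
    ∃ π', ABMassign q t π' i = some a ∧ ABMassign q t' π' i = some b := by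
  obtain ⟨he, hn, hf⟩ := hd
  obtain ⟨fa, fb⟩ := hs.2 _ hf
  -- The number of states up to round `r` in which `x` is unassigned, with ties among the agents
  -- still unassigned after round `r` broken in favor of `i`.
  let key : Fin n → ℕ := fun x =>
    ((Finset.range (r + 1)).filter fun s => (abmRun q t π s).1 x = none).card +
      if x ≠ i ∧ (abmRun q t π r).1 x = none then 1 else 0
  have down : ∀ (x : Fin n) (s s' : ℕ), s ≤ s' → (abmRun q t π s').1 x = none →
      (abmRun q t π s).1 x = none := by
    intro x s s' hss h
    cases hh : (abmRun q t π s).1 x with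
    | none => rfl
    | some j => simp [abmRun_some q t π hss x j hh] at h
  have key_le : ∀ (x : Fin n) (s : ℕ), s ≤ r → (abmRun q t π s).1 x ≠ none → key x ≤ s := by
    intro x s hsr hx
    have h1 : ¬ (x ≠ i ∧ (abmRun q t π r).1 x = none) := fun hc => hx (down x s r hsr hc.2)
    simp only [key, h1, if_false, add_zero]
    calc _ ≤ (Finset.range s).card := Finset.card_le_card (by
            intro s' hs'
            simp only [Finset.mem_filter, Finset.mem_range] at hs' ⊢
            by_contra hc
            exact hx (down x s s' (by omega) hs'.2))
      _ = s := by simp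
  have count_ge : ∀ (x : Fin n) (s : ℕ), s ≤ r → (abmRun q t π s).1 x = none →
      s + 1 ≤ ((Finset.range (r + 1)).filter fun s => (abmRun q t π s).1 x = none).card := by
    intro x s hsr hx
    calc s + 1 = (Finset.range (s + 1)).card := by simp
      _ ≤ _ := Finset.card_le_card (by
            intro s' hs'
            simp only [Finset.mem_filter, Finset.mem_range] at hs' ⊢
            exact ⟨by omega, down x s' s (by omega) hx⟩)
  have key_i : key i ≤ r + 1 := by
    simp only [key, ne_eq, not_true_eq_false, false_and, if_false, add_zero]
    simpa using Finset.card_filter_le (Finset.range (r + 1))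
      (fun s => (abmRun q t π s).1 i = none)
  obtain ⟨π', hπ'⟩ := exists_sorted key
  have sep : ∀ s ≤ r, (priorityList π').Pairwise fun x y =>
      (abmRun q t π s).1 y ≠ none → (abmRun q t π s).1 x ≠ none := by
    intro s hsr
    refine hπ'.imp ?_
    intro x y hxy hy hx
    have h1 := key_le y s hsr hy
    have h2 := count_ge x s hsr hx
    have h3 : s + 1 ≤ key x := h2.trans (Nat.le_add_right _ _)
    omega
  have run : abmRun q t π' r = abmRun q t π r := abmRun_reorder q t π π' r sep r le_rfl
  have run' : abmRun q t' π' r = abmRun q t π r := by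
    rw [abmRun_reorder q t' π π' r _ r le_rfl, he r le_rfl]
    intro s hsr
    rw [← he s hsr]
    exact sep s hsr
  have first : (priorityList π').Pairwise fun x y =>
      y = i → (abmRun q t π r).1 x ≠ none := by
    refine (hπ'.and (priorityList_nodup π')).imp ?_
    rintro x y ⟨hxy, hne⟩ rfl hx
    have h2 := count_ge x r le_rfl hx
    have h3 : r + 1 + 1 ≤ key x := by
      simp only [key]
      rw [if_pos ⟨hne, hx⟩]
      omega
    omega
  refine ⟨π', ?_, ?_⟩
  · rw [ABMassign_eq]
    apply abmRun_some q t π' (Nat.succ_le_of_lt hr) i a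
    rw [Nat.succ_eq_add_one, abmRun_succ, run]
    exact round_first t π' _ i a hn fa first
  · rw [ABMassign_eq]
    apply abmRun_some q t' π' (Nat.succ_le_of_lt hr) i b
    rw [Nat.succ_eq_add_one, abmRun_succ, run']
    exact round_first t' π' _ i b hn fb first

/-! ### Averaging over the priority orderings -/

/-- Pointwise monotonicity together with one separating ordering gives a strict inequality
of averages. -/
theorem ABM_lt {n m : ℕ} (q : Fin m → ℕ) (t t' : Fin n → Pref m) (i : Fin n) (j : Fin m)
    (hle : ∀ π, ABMassign q t' π i = some j → ABMassign q t π i = some j)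
    (π : Equiv.Perm (Fin n)) (h : ABMassign q t π i = some j)
    (h' : ABMassign q t' π i ≠ some j) : ABM q t' i j < ABM q t i j := by
  unfold ABM
  apply div_lt_div_of_pos_right _ (by positivity)
  apply Finset.sum_lt_sum
  · intro ρ _
    unfold detAlloc
    by_cases h1 : ABMassign q t' ρ i = some j
    · simp [h1, hle ρ h1]
    · simp only [h1, if_false]
      split_ifs <;> norm_num
  · exact ⟨π, Finset.mem_univ _, by simp [detAlloc, h', h]⟩

/-- ABM is swap monotonic: after swapping two adjacent objects
`a = t i k ≻ b = t i k'` (with `k' = k + 1`) in agent `i`'s report, either `i`'s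
allocation vector is unchanged, or its probability for `a` strictly decreases and
its probability for `b` strictly increases. -/
theorem abm_swap_monotonic (n m : ℕ) (q : Fin m → ℕ) (hq : n ≤ ∑ j, q j)
    (t : Fin n → Pref m) (i : Fin n) (k k' : Fin m) (hkk' : (k : ℕ) + 1 = (k' : ℕ)) :
    ABM q t i = ABM q (Function.update t i ((Equiv.swap k k').trans (t i))) i ∨
    (ABM q (Function.update t i ((Equiv.swap k k').trans (t i))) i (t i k)
        < ABM q t i (t i k) ∧
     ABM q t i (t i k')
        < ABM q (Function.update t i ((Equiv.swap k k').trans (t i))) i (t i k')) := by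
  set t' := Function.update t i ((Equiv.swap k k').trans (t i)) with ht'
  have hab : t i k ≠ t i k' := by
    intro hc
    have := (t i).injective hc
    subst this
    omega
  have hs : SwapRelated t t' i (t i k) (t i k') := by
    refine ⟨fun x hx => by simp [ht', hx], fun cap hc => ?_⟩
    have e : t' i = (Equiv.swap k k').trans (t i) := by simp [ht']
    rw [e] at hc ⊢
    exact favorite_swap (t i) k k' hkk' cap hc
  by_cases hall : ∀ π, ABMassign q t π i = ABMassign q t' π i
  · left
    funext j
    simp only [ABM, detAlloc, hall]
  · right
    push Not at hall
    obtain ⟨π, hπ⟩ := hall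
    rcases runs_dichotomy q hs.1 π n with he | ⟨r, hr, hd⟩
    · exact absurd (by rw [ABMassign_eq, ABMassign_eq, he n le_rfl]) hπ
    · obtain ⟨π', h1, h2⟩ := exists_priority q hs π r hr hd
      exact ⟨ABM_lt q t t' i _ (assign_mono q hs) π' h1 (by simp [h2, Ne.symm hab]),
        ABM_lt q t' t i _ (assign_mono q hs.symm) π' h2 (by simp [h1, hab])⟩
end
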